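/- arXiv:1212.6540 — 3 statements merged into one kernel-verified Lean document; each statement's English description precedes it below -/
import Mathlib

section
/- Let n ∈ ℕ and let L be an O-submodule of 𝔤 with pⁿL₀ ⊆ L ⊆ p⁻ⁿL₀ and L^♯ = L. Then d(L / pⁿL₀) = nN and d(p⁻ⁿL₀ / L) = nN. -/
noncomputable section

open scoped Pointwise

/-- The length `d(Z)` of a module, i.e. the Krull dimension of its lattice of submodules. -/
def modLength (R M : Type*) [Ring R] [AddCommGroup M] [Module R M] : WithBot ℕ∞ :=
  Order.krullDim (Submodule R M)


section Helpers

open Module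

variable {R : Type*} [CommRing R] {V : Type*} [AddCommGroup V] [Module R V]

/-- Submodules of `Y / X` correspond to the interval. -/
def subIccIso (X Y : Submodule R V) (h : X ≤ Y) :
    Submodule R ↥(Submodule.map X.mkQ Y) ≃o Set.Icc X Y :=
  (Submodule.mapIic (Submodule.map X.mkQ Y)).trans
  { toFun := fun Z => ⟨Submodule.comap X.mkQ Z.1, Submodule.le_comap_mkQ _ _, by
      have := Submodule.comap_mono (f := X.mkQ) Z.2
      rwa [Submodule.comap_map_mkQ, sup_eq_right.2 h] at this⟩
    invFun := fun M => ⟨Submodule.map X.mkQ M.1, Submodule.map_mono M.2.2⟩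
    left_inv := fun Z => by
      ext1
      exact Submodule.map_comap_eq_of_surjective (Submodule.mkQ_surjective X) _
    right_inv := fun M => by
      ext1
      simp only [Submodule.comap_map_mkQ]
      exact sup_eq_right.2 M.2.1
    map_rel_iff' := by
      intro a b
      simp only [Equiv.coe_fn_mk]
      exact Submodule.comap_le_comap_iff_of_surjective (Submodule.mkQ_surjective X) }

theorem length_interval_add (A L B : Submodule R V) (h1 : A ≤ L) (h2 : L ≤ B) :
    Module.length R ↥(Submodule.map A.mkQ B) =
      Module.length R ↥(Submodule.map A.mkQ L) + Module.length R ↥(Submodule.map L.mkQ B) := by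
  have hm : ∀ x ∈ Submodule.map A.mkQ B, Submodule.factor h1 x ∈ Submodule.map L.mkQ B := by
    rintro _ ⟨b, hb, rfl⟩
    exact ⟨b, hb, rfl⟩
  refine Module.length_eq_add_of_exact
    (Submodule.inclusion (Submodule.map_mono (f := A.mkQ) h2))
    ((Submodule.factor h1).restrict hm) (Submodule.inclusion_injective _) ?_ ?_
  · rintro ⟨_, b, hb, rfl⟩
    exact ⟨⟨_, b, hb, rfl⟩, rfl⟩
  · rintro ⟨_, b, hb, rfl⟩
    constructor
    · intro h
      have h' : L.mkQ b = 0 := congrArg Subtype.val h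
      have hb' : b ∈ L := by simpa using h'
      exact ⟨⟨_, b, hb', rfl⟩, rfl⟩
    · rintro ⟨⟨_, c, hc, rfl⟩, h⟩
      have h' : A.mkQ c = A.mkQ b := congrArg Subtype.val h
      apply Subtype.ext
      change Submodule.factor h1 (A.mkQ b) = 0
      rw [← h']
      change L.mkQ c = 0
      simpa using hc

theorem length_smul_quot {ι : Type*} [Fintype ι] (B : Submodule R V) (b : Basis ι R B) (c : R) :
    Module.length R ↥(Submodule.map (c • B).mkQ B) = Fintype.card ι * Ring.ord R c := by
  classical
  let f0 : (ι → R) →ₗ[R] V := B.subtype ∘ₗ b.equivFun.symm.toLinearMap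
  have hf0 : ∀ v, f0 v ∈ B := fun v => (b.equivFun.symm v).2
  let f : (ι → R) →ₗ[R] ↥(Submodule.map (c • B).mkQ B) :=
    LinearMap.codRestrict _ ((c • B).mkQ ∘ₗ f0) (fun v => ⟨f0 v, hf0 v, rfl⟩)
  have hsurj : Function.Surjective f := by
    rintro ⟨_, x, hx, rfl⟩
    refine ⟨b.equivFun ⟨x, hx⟩, ?_⟩
    apply Subtype.ext
    change (c • B).mkQ ((b.equivFun.symm (b.equivFun ⟨x, hx⟩) : B) : V) = _
    rw [LinearEquiv.symm_apply_apply]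
  have hker : LinearMap.ker f = Submodule.pi Set.univ (fun _ : ι => (Ideal.span {c} : Ideal R)) := by
    ext v
    have h1 : v ∈ LinearMap.ker f ↔ f0 v ∈ c • B := by
      rw [LinearMap.mem_ker, ← Submodule.Quotient.mk_eq_zero, Subtype.ext_iff]
      rfl
    rw [h1, Submodule.mem_smul_pointwise_iff_exists, Submodule.mem_pi]
    simp only [Set.mem_univ, true_imp_iff, Ideal.mem_span_singleton]
    constructor
    · rintro ⟨y, hy, h⟩ i
      have h2 : b.equivFun.symm v = c • (⟨y, hy⟩ : B) := Subtype.ext h.symm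
      have h3 : v = c • b.equivFun ⟨y, hy⟩ := by
        rw [← map_smul, ← h2, LinearEquiv.apply_symm_apply]
      exact ⟨b.equivFun ⟨y, hy⟩ i, by conv_lhs => rw [h3]
                                      rfl⟩
    · intro h
      choose w hw using h
      refine ⟨f0 w, hf0 w, ?_⟩
      rw [← map_smul]
      congr 1
      ext i
      exact (hw i).symm
  rw [← (f.quotKerEquivOfSurjective hsurj).length_eq,
    (Submodule.quotEquivOfEq _ _ hker).length_eq,
    (Submodule.quotientPi (fun _ : ι => (Ideal.span {c} : Ideal R))).length_eq, Module.length_pi]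
  simp [Ring.ord]

theorem interval_dual (D : Submodule R V → Submodule R V) (A L B : Submodule R V)
    (h1 : A ≤ L) (h2 : L ≤ B) (hanti : ∀ M N, M ≤ N → D N ≤ D M)
    (hinv : ∀ M, A ≤ M → M ≤ B → D (D M) = M) (hA : D A = B) (hL : D L = L) :
    Module.length R ↥(Submodule.map A.mkQ L) = Module.length R ↥(Submodule.map L.mkQ B) := by
  have hB : D B = A := by rw [← hA]; exact hinv A le_rfl (h1.trans h2)
  apply WithBot.coe_injective
  rw [Module.coe_length, Module.coe_length, Order.krullDim_eq_of_orderIso (subIccIso A L h1),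
    Order.krullDim_eq_of_orderIso (subIccIso L B h2), ← Order.krullDim_orderDual]
  let e : (Set.Icc A L)ᵒᵈ ≃o Set.Icc L B :=
  { toFun := fun M => ⟨D (OrderDual.ofDual M).1,
      hL.symm.le.trans (hanti _ _ (OrderDual.ofDual M).2.2),
      (hanti _ _ (OrderDual.ofDual M).2.1).trans hA.le⟩
    invFun := fun M => OrderDual.toDual ⟨D M.1,
      hB.symm.le.trans (hanti _ _ M.2.2), (hanti _ _ M.2.1).trans hL.le⟩
    left_inv := fun M => by
      apply OrderDual.ofDual.injective
      exact Subtype.ext (hinv _ (OrderDual.ofDual M).2.1 ((OrderDual.ofDual M).2.2.trans h2))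
    right_inv := fun M => Subtype.ext (hinv _ (h1.trans M.2.1) M.2.2)
    map_rel_iff' := by
      intro M N
      constructor
      · intro h
        have := hanti _ _ (show D (OrderDual.ofDual M).1 ≤ D (OrderDual.ofDual N).1 from h)
        rw [hinv _ (OrderDual.ofDual M).2.1 ((OrderDual.ofDual M).2.2.trans h2),
          hinv _ (OrderDual.ofDual N).2.1 ((OrderDual.ofDual N).2.2.trans h2)] at this
        exact this
      · intro h
        exact hanti _ _ (show (OrderDual.ofDual N).1 ≤ (OrderDual.ofDual M).1 from h) }
  exact Order.krullDim_eq_of_orderIso e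

theorem core_lemma [IsDomain R] [IsPrincipalIdealRing R] {K : Type*} [Field K] [Algebra R K]
    [IsFractionRing R K] [Module K V] [IsScalarTower R K V] [FiniteDimensional K V]
    (F : LinearMap.BilinForm K V) (hF : F.Nondegenerate) (hs : F.IsSymm)
    (ϖ : R) (hϖ : Irreducible ϖ) (L₀ : Submodule R V) (hfg : L₀.FG)
    (hspan : Submodule.span K (L₀ : Set V) = ⊤)
    (hself : F.dualSubmodule L₀ = L₀) (n : ℕ) (L : Submodule R V)
    (hL1 : ϖ ^ n • L₀ ≤ L) (hL2 : L ≤ L₀.comap (LinearMap.lsmul R V (ϖ ^ n)))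
    (hL : F.dualSubmodule L = L) :
    Module.length R ↥(Submodule.map (ϖ ^ n • L₀).mkQ L) = (n * Module.finrank K V : ℕ) ∧
    Module.length R ↥(Submodule.map L.mkQ (L₀.comap (LinearMap.lsmul R V (ϖ ^ n)))) =
      (n * Module.finrank K V : ℕ) := by
  set B := L₀.comap (LinearMap.lsmul R V (ϖ ^ n)) with hBdef
  set A := ϖ ^ n • L₀ with hAdef
  have hq : algebraMap R K (ϖ ^ n) ≠ 0 := by
    rw [Ne, FaithfulSMul.algebraMap_eq_zero_iff]
    exact pow_ne_zero _ hϖ.ne_zero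
  set q := algebraMap R K (ϖ ^ n) with hqdef
  have hqs : ∀ x : V, ϖ ^ n • x = q • x := fun x => (algebraMap_smul K _ x).symm
  have hmB : ∀ x, x ∈ B ↔ q • x ∈ L₀ := by
    intro x
    rw [← hqs]; rfl
  have hmA : ∀ x, x ∈ A ↔ ∃ y ∈ L₀, q • y = x := by
    intro x
    rw [hAdef, Submodule.mem_smul_pointwise_iff_exists]
    simp only [hqs]
  have hBfg : B.FG := by
    have : B = L₀.map ((LinearMap.lsmul K V q⁻¹).restrictScalars R) := by
      ext x
      rw [hmB, Submodule.mem_map]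
      constructor
      · intro h
        exact ⟨_, h, by simp [smul_smul, hq]⟩
      · rintro ⟨y, hy, rfl⟩
        simpa [smul_smul, hq] using hy
    rw [this]
    exact hfg.map _
  have hAspan : Submodule.span K (A : Set V) = ⊤ := by
    rw [eq_top_iff, ← hspan, Submodule.span_le]
    intro x hx
    have : q • x ∈ Submodule.span K (A : Set V) := Submodule.subset_span ((hmA _).2 ⟨x, hx, rfl⟩)
    have := Submodule.smul_mem _ q⁻¹ this
    simpa [smul_smul, hq] using this
  have hlat : ∀ M, A ≤ M → M ≤ B → Submodule.IsLattice K M := by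
    intro M h1 h2
    refine ⟨?_, ?_⟩
    · have : Module.Finite R B := Module.Finite.iff_fg.2 hBfg
      have : IsNoetherian R M := isNoetherian_of_le h2
      exact Module.Finite.iff_fg.1 inferInstance
    · rw [eq_top_iff, ← hAspan]
      exact Submodule.span_mono h1
  have hinv : ∀ M, A ≤ M → M ≤ B → F.dualSubmodule (F.dualSubmodule M) = M := by
    intro M h1 h2
    have := hlat M h1 h2
    let b := Module.Free.chooseBasis R M
    have hM : Submodule.span R (Set.range (b.extendOfIsLattice K)) = M := by
      have : Set.range (b.extendOfIsLattice K) = M.subtype '' Set.range b := by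
        rw [← Set.range_comp]
        congr 1
        ext i
        simp
      rw [this, ← Submodule.map_span, b.span_eq, Submodule.map_top, Submodule.range_subtype]
    have h3 := LinearMap.BilinForm.dualSubmodule_dualSubmodule_of_basis (R := R) F hF hs
      (b.extendOfIsLattice K)
    rwa [hM] at h3
  have hanti : ∀ M N : Submodule R V, M ≤ N → F.dualSubmodule N ≤ F.dualSubmodule M :=
    fun M N h x hx y hy => hx y (h hy)
  have hdA : F.dualSubmodule A = B := by
    ext x
    rw [hmB, ← hself, LinearMap.BilinForm.mem_dualSubmodule, LinearMap.BilinForm.mem_dualSubmodule]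
    constructor
    · intro h y hy
      have := h (q • y) ((hmA _).2 ⟨y, hy, rfl⟩)
      simpa using this
    · intro h z hz
      obtain ⟨y, hy, rfl⟩ := (hmA z).1 hz
      simpa using h y hy
  have heq := interval_dual (fun M => F.dualSubmodule M) A L B hL1 hL2 hanti hinv hdA hL
  have hadd := length_interval_add A L B hL1 hL2
  have hAB : A = ϖ ^ (2 * n) • B := by
    ext x
    rw [hmA, Submodule.mem_smul_pointwise_iff_exists]
    simp only [two_mul, pow_add, mul_smul, hqs]
    constructor
    · rintro ⟨y, hy, rfl⟩
      exact ⟨q⁻¹ • y, (hmB _).2 (by simpa [smul_smul, hq] using hy), by simp [smul_smul, hq]⟩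
    · rintro ⟨y, hy, rfl⟩
      exact ⟨q • y, (hmB _).1 hy, rfl⟩
  have htot : Module.length R ↥(Submodule.map A.mkQ B) = (2 * (n * Module.finrank K V) : ℕ) := by
    have := hlat B (hL1.trans hL2) le_rfl
    let b := Module.Free.chooseBasis R B
    rw [hAB, length_smul_quot B b, Ring.ord_pow (mem_nonZeroDivisors_of_ne_zero hϖ.ne_zero),
      Ring.ord_of_irreducible hϖ, Module.finrank_eq_card_basis (b.extendOfIsLattice K)]
    simp
    ring
  rw [htot, ← heq] at hadd
  rw [← heq, and_self]
  generalize Module.length R ↥(Submodule.map A.mkQ L) = t at hadd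
  cases t with
  | top => exact absurd (hadd.trans (top_add _)) (ENat.coe_ne_top _)
  | coe t =>
    norm_cast at hadd ⊢
    omega

end Helpers

theorem statement9
    (p : ℕ) [Fact p.Prime]
    (k : Type*) [Field k] [IsAlgClosed k] [CharP k p]
    (K : Type*) [Field K] [Algebra (WittVector p k) K] [IsFractionRing (WittVector p k) K]
    (𝔤 : Type*) [LieRing 𝔤] [LieAlgebra K 𝔤] [FiniteDimensional K 𝔤]
    [Module (WittVector p k) 𝔤] [IsScalarTower (WittVector p k) K 𝔤]
    (hnd : (killingForm K 𝔤).Nondegenerate)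
    (L₀ : Submodule (WittVector p k) 𝔤) (hfg : L₀.FG)
    (hspan : Submodule.span K (L₀ : Set 𝔤) = ⊤)
    (hbr : ∀ x ∈ L₀, ∀ y ∈ L₀, ⁅x, y⁆ ∈ L₀)
    (hself : {x : 𝔤 | ∀ y ∈ L₀, killingForm K 𝔤 x y ∈ (algebraMap (WittVector p k) K).range}
      = (L₀ : Set 𝔤))
    (n : ℕ) (L : Submodule (WittVector p k) 𝔤)
    (hL1 : (p : WittVector p k) ^ n • L₀ ≤ L)
    (hL2 : L ≤ L₀.comap (LinearMap.lsmul (WittVector p k) 𝔤 ((p : WittVector p k) ^ n)))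
    (hLsharp : {x : 𝔤 | ∀ y ∈ L, killingForm K 𝔤 x y ∈ (algebraMap (WittVector p k) K).range}
      = (L : Set 𝔤)) :
    modLength (WittVector p k) ↥(Submodule.map ((p : WittVector p k) ^ n • L₀).mkQ L)
      = (n * Module.finrank K 𝔤 : ℕ) ∧
    modLength (WittVector p k)
      ↥(Submodule.map L.mkQ
          (L₀.comap (LinearMap.lsmul (WittVector p k) 𝔤 ((p : WittVector p k) ^ n))))
      = (n * Module.finrank K 𝔤 : ℕ) := by
  have hR : ∀ M : Submodule (WittVector p k) 𝔤,
      ({x : 𝔤 | ∀ y ∈ M, killingForm K 𝔤 x y ∈ (algebraMap (WittVector p k) K).range}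
        = (M : Set 𝔤)) → LinearMap.BilinForm.dualSubmodule (killingForm K 𝔤) M = M := by
    intro M h
    apply SetLike.coe_injective
    rw [← h]
    ext x
    simp only [SetLike.mem_coe, LinearMap.BilinForm.mem_dualSubmodule, Submodule.mem_one,
      Set.mem_ofPred_eq, RingHom.mem_range]
  have hmain := core_lemma (killingForm K 𝔤) hnd ⟨LieModule.traceForm_comm K 𝔤 𝔤⟩
    (p : WittVector p k) (WittVector.irreducible p) L₀ hfg hspan (hR _ hself) n L hL1 hL2
    (hR _ hLsharp)
  unfold modLength
  rw [← Module.coe_length, ← Module.coe_length, hmain.1, hmain.2]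
  exact ⟨rfl, rfl⟩
end
end

section
/- Let n ∈ ℕ and let L be an O-submodule of 𝔤 with pⁿL₀ ⊆ L ⊆ p⁻ⁿL₀ such that d(L / pⁿL₀) = nN and κ(x,y) ∈ O for all x, y ∈ L. Then L^♯ = L. -/
noncomputable section

open scoped Pointwise

namespace Aux10

open Module Submodule

section len
variable {R M : Type*} [CommRing R] [AddCommGroup M] [Module R M]

/-- relative length -/
def len (A B : Submodule R M) : ℕ∞ := Module.length R ↥(B.map A.mkQ)

/-- Submodules of a subquotient are the interval. -/
def iso (A B : Submodule R M) (h : A ≤ B) : Submodule R ↥(B.map A.mkQ) ≃o Set.Icc A B where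
  toFun S := ⟨(S.map (B.map A.mkQ).subtype).comap A.mkQ, by
      intro x hx
      have : A.mkQ x = 0 := by simpa using hx
      simp [this], by
      intro x hx
      obtain ⟨⟨y, hy⟩, -, hxy⟩ := hx
      obtain ⟨z, hz, rfl⟩ := hy
      have hxy' : A.mkQ z = A.mkQ x := hxy
      have h1 : z - x ∈ A := (Submodule.Quotient.eq A).1 hxy'
      have := B.sub_mem hz (h h1)
      simpa using this⟩
  invFun Z := (Z.1.map A.mkQ).comap (B.map A.mkQ).subtype
  left_inv S := by
    simp only
    rw [Submodule.map_comap_eq_of_surjective A.mkQ_surjective,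
      Submodule.comap_map_eq_of_injective (Submodule.injective_subtype _)]
  right_inv Z := by
    apply Subtype.ext
    simp only
    rw [Submodule.map_comap_subtype, inf_eq_right.2 (Submodule.map_mono Z.2.2),
      Submodule.comap_map_mkQ, sup_eq_right.2 Z.2.1]
  map_rel_iff' {S T} := by
    change (S.map (B.map A.mkQ).subtype).comap A.mkQ ≤ (T.map (B.map A.mkQ).subtype).comap A.mkQ ↔ _
    rw [Submodule.comap_le_comap_iff_of_surjective A.mkQ_surjective,
      Submodule.map_le_map_iff_of_injective (Submodule.injective_subtype _)]

lemma len_eq (A B : Submodule R M) (h : A ≤ B) :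
    (len A B : WithBot ℕ∞) = Order.krullDim (Set.Icc A B) := by
  rw [len, Module.coe_length, Order.krullDim_eq_of_orderIso (iso A B h)]

lemma len_add {A B C : Submodule R M} (h : A ≤ B) (h' : B ≤ C) :
    len A C = len A B + len B C := by
  have hm : ∀ x ∈ C.map A.mkQ, Submodule.factor h x ∈ C.map B.mkQ := by
    rintro _ ⟨x, hx, rfl⟩
    exact ⟨x, hx, rfl⟩
  refine Module.length_eq_add_of_exact
    (Submodule.inclusion (Submodule.map_mono (f := A.mkQ) h'))
    ((Submodule.factor h).restrict hm) (Submodule.inclusion_injective _) ?_ ?_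
  · rintro ⟨_, x, hx, rfl⟩
    exact ⟨⟨A.mkQ x, x, hx, rfl⟩, rfl⟩
  · rintro ⟨_, x, hx, rfl⟩
    constructor
    · intro h0
      have h1 : B.mkQ x = 0 := congrArg Subtype.val h0
      have h2 : x ∈ B := by simpa using h1
      exact ⟨⟨A.mkQ x, x, h2, rfl⟩, rfl⟩
    · rintro ⟨⟨_, y, hy, rfl⟩, hxy⟩
      have hxy' : A.mkQ y = A.mkQ x := congrArg Subtype.val hxy
      apply Subtype.ext
      change B.mkQ x = 0
      have h1 : y - x ∈ A := (Submodule.Quotient.eq A).1 hxy'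
      have := B.sub_mem hy (h h1)
      simpa using this

lemma eq_of_len_zero {A B : Submodule R M} (h : A ≤ B) (h0 : len A B = 0) : A = B := by
  rw [len, Module.length_eq_zero_iff, Submodule.subsingleton_iff_eq_bot] at h0
  apply le_antisymm h
  have h0 := Submodule.map_le_iff_le_comap.1 h0.le
  simpa using h0

lemma len_smul {ι : Type*} [Fintype ι] (L : Submodule R M) (b : Basis ι R L) (c : R) :
    len (c • L) L = Fintype.card ι * Ring.ord R c := by
  let φ : L →ₗ[R] (ι → R ⧸ Ideal.span {c}) :=
    (LinearMap.pi fun i => (Ideal.span {c}).mkQ ∘ₗ LinearMap.proj i) ∘ₗ b.equivFun.toLinearMap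
  let ψ : L →ₗ[R] ↥(L.map (c • L).mkQ) :=
    (c • L).mkQ.restrict (fun x hx => ⟨x, hx, rfl⟩)
  have hφ : Function.Surjective φ := by
    intro f
    choose g hg using fun i => (Ideal.span {c}).mkQ_surjective (f i)
    refine ⟨b.equivFun.symm g, ?_⟩
    ext i
    simp only [φ, LinearMap.comp_apply, LinearEquiv.coe_coe, LinearEquiv.apply_symm_apply]
    exact hg i
  have hψ : Function.Surjective ψ := by
    rintro ⟨_, x, hx, rfl⟩
    exact ⟨⟨x, hx⟩, rfl⟩
  have hker : LinearMap.ker φ = LinearMap.ker ψ := by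
    ext x
    have h1 : x ∈ LinearMap.ker ψ ↔ (x : M) ∈ c • L := by
      rw [LinearMap.mem_ker, ← Subtype.coe_inj]
      exact Submodule.Quotient.mk_eq_zero _
    have h2 : x ∈ LinearMap.ker φ ↔ ∀ i, c ∣ b.equivFun x i := by
      rw [LinearMap.mem_ker, funext_iff]
      refine forall_congr' fun i => ?_
      rw [← Ideal.mem_span_singleton]
      exact Submodule.Quotient.mk_eq_zero _
    rw [h1, h2]
    constructor
    · intro h
      choose g hg using h
      refine ⟨(b.equivFun.symm g : L), (b.equivFun.symm g).2, ?_⟩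
      change c • ((b.equivFun.symm g : L) : M) = x
      rw [← Submodule.coe_smul, ← map_smul]
      congr 1
      rw [LinearEquiv.symm_apply_eq]
      ext i
      simp [hg i]
    · rintro ⟨y, hy, hyx⟩ i
      have : x = c • (⟨y, hy⟩ : L) := Subtype.ext hyx.symm
      rw [this, map_smul]
      exact ⟨_, rfl⟩
  have e : (ι → R ⧸ Ideal.span {c}) ≃ₗ[R] ↥(L.map (c • L).mkQ) :=
    (φ.quotKerEquivOfSurjective hφ).symm ≪≫ₗ Submodule.quotEquivOfEq _ _ hker ≪≫ₗ
      ψ.quotKerEquivOfSurjective hψ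
  rw [len, ← e.length_eq, Module.length_pi, Ring.ord]
  simp

end len

section dual
variable {R K V : Type*} [CommRing R] [IsDomain R] [IsPrincipalIdealRing R] [Field K] [Algebra R K]
  [IsFractionRing R K] [AddCommGroup V] [Module K V] [FiniteDimensional K V] [Module R V]
  [IsScalarTower R K V] (B : LinearMap.BilinForm K V) (hB : B.Nondegenerate) (hs : B.IsSymm)

omit [IsDomain R] [IsPrincipalIdealRing R] [IsFractionRing R K] [FiniteDimensional K V] in
lemma dual_anti {X Y : Submodule R V} (h : X ≤ Y) : B.dualSubmodule Y ≤ B.dualSubmodule X :=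
  fun _ hx y hy => hx y (h hy)

omit [FiniteDimensional K V] in
lemma exists_basis (X : Submodule R V) [IsLattice K X] :
    ∃ (n : ℕ) (b : Basis (Fin n) R X) (b' : Basis (Fin n) K V),
      span R (Set.range b') = X := by
  have : Module.IsTorsionFree R K := inferInstance
  let b := Module.finBasis R X
  refine ⟨_, b, b.extendOfIsLattice K, ?_⟩
  have : (⇑(b.extendOfIsLattice K) : _ → V) = X.subtype ∘ b := by
    ext i; simp
  rw [this, Set.range_comp, ← Submodule.map_span, b.span_eq, Submodule.map_top, range_subtype]

include hB

lemma dual_lattice (X : Submodule R V) [IsLattice K X] : IsLattice K (B.dualSubmodule X) := by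
  obtain ⟨n, -, b, hb⟩ := exists_basis (K := K) X
  have h := LinearMap.BilinForm.dualSubmodule_span_of_basis (R := R) B hB b
  rw [hb] at h
  rw [h]
  refine ⟨Submodule.fg_span (Set.finite_range _), ?_⟩
  rw [Submodule.span_span_of_tower, Basis.span_eq]

include hs

lemma dual_dual (X : Submodule R V) [IsLattice K X] :
    B.dualSubmodule (B.dualSubmodule X) = X := by
  obtain ⟨n, -, b, hb⟩ := exists_basis (K := K) X
  have h := LinearMap.BilinForm.dualSubmodule_dualSubmodule_of_basis (R := R) B hB hs b
  rwa [hb] at h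

lemma len_dual {X Y : Submodule R V} [IsLattice K X] [IsLattice K Y] (h : X ≤ Y) :
    len X Y ≤ len (B.dualSubmodule Y) (B.dualSubmodule X) := by
  rw [← WithBot.coe_le_coe, len_eq _ _ h, len_eq _ _ (dual_anti B h),
    ← Order.krullDim_orderDual (α := Set.Icc (B.dualSubmodule Y) (B.dualSubmodule X))]
  have hl : ∀ Z : Set.Icc X Y, IsLattice K Z.1 := by
    intro Z
    refine IsLattice.of_le_of_isLattice_of_fg K Z.2.1 ?_
    have : IsNoetherian R Y := inferInstance
    have : IsNoetherian R Z.1 := isNoetherian_of_le Z.2.2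
    exact Module.Finite.iff_fg.1 inferInstance
  let f : Set.Icc X Y → (Set.Icc (B.dualSubmodule Y) (B.dualSubmodule X))ᵒᵈ := fun Z =>
    OrderDual.toDual ⟨B.dualSubmodule Z.1, dual_anti B Z.2.2, dual_anti B Z.2.1⟩
  refine Order.krullDim_le_of_strictMono f (Monotone.strictMono_of_injective ?_ ?_)
  · intro Z W hZW
    exact dual_anti B hZW
  · intro Z W hZW
    have h1 : B.dualSubmodule Z.1 = B.dualSubmodule W.1 := congrArg (fun t => (OrderDual.ofDual t).1) hZW
    have := hl Z
    have := hl W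
    apply Subtype.ext
    rw [← dual_dual B hB hs Z.1, h1, dual_dual B hB hs W.1]

lemma main (L₀ L : Submodule R V) [IsLattice K L₀] (c : R) (hc0 : c ≠ 0) (m : ℕ)
    (hc : Ring.ord R c = m) (h0 : B.dualSubmodule L₀ = L₀) (h1 : c • L₀ ≤ L)
    (h2 : ∀ x ∈ L, c • x ∈ L₀) (hlen : len (c • L₀) L = (m * finrank K V : ℕ))
    (hint : L ≤ B.dualSubmodule L) : B.dualSubmodule L = L := by
  have hA0 : c • L₀ ≤ L₀ := by
    rintro _ ⟨y, hy, rfl⟩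
    exact L₀.smul_mem c hy
  have hK : algebraMap R K c ≠ 0 := by
    rwa [Ne, FaithfulSMul.algebraMap_eq_zero_iff]
  have hAl : IsLattice K (c • L₀) := by
    have := IsLattice.smul K L₀ (Units.mk0 _ hK)
    convert this using 1
    ext x
    constructor
    · rintro ⟨y, hy, rfl⟩
      refine ⟨y, hy, ?_⟩
      change algebraMap R K c • y = c • y
      simp
    · rintro ⟨y, hy, rfl⟩
      refine ⟨y, hy, ?_⟩
      change c • y = algebraMap R K c • y
      simp
  have hBl : IsLattice K (B.dualSubmodule (c • L₀)) := dual_lattice B hB _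
  have hLB : L ≤ B.dualSubmodule (c • L₀) := hint.trans (dual_anti B h1)
  have hLl : IsLattice K L := by
    refine IsLattice.of_le_of_isLattice_of_fg K h1 ?_
    have : IsNoetherian R (B.dualSubmodule (c • L₀)) := inferInstance
    have : IsNoetherian R L := isNoetherian_of_le hLB
    exact Module.Finite.iff_fg.1 inferInstance
  have hLdl : IsLattice K (B.dualSubmodule L) := dual_lattice B hB _
  have h0B : L₀ ≤ B.dualSubmodule (c • L₀) := by
    conv_lhs => rw [← h0]
    exact dual_anti B hA0
  have hlen0 : len (c • L₀) L₀ = (m * finrank K V : ℕ) := by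
    obtain ⟨n, b, b', -⟩ := exists_basis (K := K) L₀
    rw [len_smul L₀ b, hc, Module.finrank_eq_card_basis b']
    push_cast
    rw [mul_comm]
  have d1 := len_dual B hB hs (h1.trans hint)
  rw [dual_dual B hB hs] at d1
  have d2 := len_dual B hB hs h0B
  rw [dual_dual B hB hs, h0] at d2
  have a1 := len_add h1 hLB
  rw [len_add hA0 h0B, hlen, hlen0] at a1
  have a2 := len_add h1 hint
  rw [hlen] at a2
  rw [hlen0] at d2
  symm
  apply eq_of_len_zero hint
  generalize len L (B.dualSubmodule (c • L₀)) = u at *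
  generalize len L₀ (B.dualSubmodule (c • L₀)) = v at *
  generalize len (c • L₀) (B.dualSubmodule L) = w at *
  generalize len L (B.dualSubmodule L) = z at *
  generalize m * finrank K V = q at *
  have t : (q : ℕ∞) ≠ ⊤ := ENat.natCast_ne_top q
  have e : v = u := (ENat.add_left_injective_of_ne_top t) (by simpa [add_comm] using a1)
  subst e
  rw [a2] at d1
  have : (q : ℕ∞) + z ≤ q + 0 := by simpa using d1.trans d2
  simpa using (ENat.add_le_add_iff_left t).1 this

end dual

end Aux10

theorem statement10
    (p : ℕ) [Fact p.Prime]
    (k : Type*) [Field k] [IsAlgClosed k] [CharP k p]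
    (K : Type*) [Field K] [Algebra (WittVector p k) K] [IsFractionRing (WittVector p k) K]
    (𝔤 : Type*) [LieRing 𝔤] [LieAlgebra K 𝔤] [FiniteDimensional K 𝔤]
    [Module (WittVector p k) 𝔤] [IsScalarTower (WittVector p k) K 𝔤]
    (hnd : (killingForm K 𝔤).Nondegenerate)
    (L₀ : Submodule (WittVector p k) 𝔤) (hfg : L₀.FG)
    (hspan : Submodule.span K (L₀ : Set 𝔤) = ⊤)
    (hbr : ∀ x ∈ L₀, ∀ y ∈ L₀, ⁅x, y⁆ ∈ L₀)
    (hself : {x : 𝔤 | ∀ y ∈ L₀, killingForm K 𝔤 x y ∈ (algebraMap (WittVector p k) K).range}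
      = (L₀ : Set 𝔤))
    (n : ℕ) (L : Submodule (WittVector p k) 𝔤)
    (hL1 : (p : WittVector p k) ^ n • L₀ ≤ L)
    (hL2 : L ≤ L₀.comap (LinearMap.lsmul (WittVector p k) 𝔤 ((p : WittVector p k) ^ n)))
    (hlen : modLength (WittVector p k) ↥(Submodule.map ((p : WittVector p k) ^ n • L₀).mkQ L)
      = (n * Module.finrank K 𝔤 : ℕ))
    (hint : ∀ x ∈ L, ∀ y ∈ L,
      killingForm K 𝔤 x y ∈ (algebraMap (WittVector p k) K).range) :
    {x : 𝔤 | ∀ y ∈ L, killingForm K 𝔤 x y ∈ (algebraMap (WittVector p k) K).range}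
      = (L : Set 𝔤) := by
  have : IsDiscreteValuationRing (WittVector p k) := inferInstance
  have : Submodule.IsLattice K L₀ := ⟨hfg, hspan⟩
  have hp := WittVector.irreducible (k := k) p
  have hp0 : (p : WittVector p k) ≠ 0 := hp.ne_zero
  have hs : (killingForm K 𝔤).IsSymm := ⟨fun x y => by
    simpa using LieModule.traceForm_comm K 𝔤 𝔤 x y⟩
  have hord : Ring.ord (WittVector p k) ((p : WittVector p k) ^ n) = n := by
    rw [Ring.ord_pow (mem_nonZeroDivisors_of_ne_zero hp0)]
    have hmax : (Ideal.span {(p : WittVector p k)}).IsMaximal :=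
      PrincipalIdealRing.isMaximal_of_irreducible hp
    have h1 : Ring.ord (WittVector p k) (p : WittVector p k) = 1 := by
      rw [Ring.ord, Module.length_eq_one_iff]
      exact (isSimpleModule_iff_isCoatom).2 hmax.out
    rw [h1]
    simp
  have key : ∀ X : Submodule (WittVector p k) 𝔤,
      {x : 𝔤 | ∀ y ∈ X, killingForm K 𝔤 x y ∈ (algebraMap (WittVector p k) K).range}
      = (LinearMap.BilinForm.dualSubmodule (killingForm K 𝔤) X : Set 𝔤) := by
    intro X
    ext x
    refine forall₂_congr fun y _ => ?_
    rw [Submodule.mem_one]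
    rfl
  rw [key] at hself
  rw [key]
  refine congrArg _ (Aux10.main (killingForm K 𝔤) hnd hs L₀ L ((p : WittVector p k) ^ n)
    (pow_ne_zero _ hp0) n hord (SetLike.coe_injective hself) hL1 (fun x hx => hL2 hx) ?_ ?_)
  · rw [← WithBot.coe_inj, Aux10.len, Module.coe_length]
    exact hlen
  · intro x hx y hy
    rw [Submodule.mem_one]
    exact hint x hx y hy
end
end

section
/- Fix n ∈ ℕ and set V_n = p⁻ⁿL₀ / pⁿL₀. The assignment sending an O-submodule L of 𝔤 to its image L/pⁿL₀ in V_n defines a bijection from the set E = { L : pⁿL₀ ⊆ L ⊆ p⁻ⁿL₀ and L^♯ = L } onto the set E' of O-submodules Z of V_n such that d(Z) = nN and κ(x,y) ∈ O for all x, y ∈ p⁻ⁿL₀ whose images in V_n lie in Z. -/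
noncomputable section

open scoped Pointwise

open Module in
lemma aux_mem_map {R V : Type*} [CommRing R] [AddCommGroup V] [Module R V]
    {A B : Submodule R V} (h : A ≤ B) (x : V) : A.mkQ x ∈ B.map A.mkQ ↔ x ∈ B := by
  rw [← Submodule.mem_comap, Submodule.comap_map_mkQ, sup_eq_right.mpr h]

def aux_ell {R V : Type*} [CommRing R] [AddCommGroup V] [Module R V]
    (A B : Submodule R V) : ℕ∞ := Module.length R ↥(B.map A.mkQ)

lemma aux_add {R V : Type*} [CommRing R] [AddCommGroup V] [Module R V]
    {A B C : Submodule R V} (hAB : A ≤ B) (hBC : B ≤ C) :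
    aux_ell A C = aux_ell A B + aux_ell B C := by
  have hm : ∀ x ∈ C.map A.mkQ, Submodule.factor hAB x ∈ C.map B.mkQ := by
    rintro _ ⟨y, hy, rfl⟩
    exact ⟨y, hy, rfl⟩
  refine Module.length_eq_add_of_exact
    (Submodule.inclusion (Submodule.map_mono hBC : B.map A.mkQ ≤ C.map A.mkQ))
    ((Submodule.factor hAB).restrict hm) (Submodule.inclusion_injective _) ?_ ?_
  · rintro ⟨_, ⟨y, hy, rfl⟩⟩
    exact ⟨⟨A.mkQ y, ⟨y, hy, rfl⟩⟩, rfl⟩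
  · rintro ⟨_, ⟨y, hy, rfl⟩⟩
    have h1 : (Submodule.factor hAB).restrict hm ⟨A.mkQ y, ⟨y, hy, rfl⟩⟩ = 0 ↔ y ∈ B := by
      rw [← Submodule.Quotient.mk_eq_zero B, Subtype.ext_iff]
      rfl
    rw [h1]
    constructor
    · intro h
      exact ⟨⟨A.mkQ y, ⟨y, h, rfl⟩⟩, rfl⟩
    · rintro ⟨⟨z, hz⟩, hz2⟩
      have : z = A.mkQ y := congrArg Subtype.val hz2
      subst this
      exact (aux_mem_map hAB y).1 hz

lemma aux_ell_Icc {R V : Type*} [CommRing R] [AddCommGroup V] [Module R V]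
    {A B : Submodule R V} (hAB : A ≤ B) :
    (aux_ell A B : WithBot ℕ∞) = Order.krullDim (Set.Icc A B) := by
  rw [aux_ell, Module.coe_length, Order.krullDim_eq_of_orderIso (Submodule.mapIic _)]
  refine Order.krullDim_eq_of_orderIso
    { toFun := fun Z => ⟨Z.1.comap A.mkQ, A.le_comap_mkQ _, ?_⟩
      invFun := fun L => ⟨L.1.map A.mkQ, Submodule.map_mono L.2.2⟩
      left_inv := ?_
      right_inv := ?_
      map_rel_iff' := ?_ }
  · intro x hx
    exact (aux_mem_map hAB x).1 (Z.2 hx)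
  · rintro ⟨Z, hZ⟩
    ext1
    exact Submodule.map_comap_eq_of_surjective A.mkQ_surjective Z
  · rintro ⟨L, hL⟩
    ext1
    exact (Submodule.comap_map_mkQ _ _).trans (sup_eq_right.mpr hL.1)
  · rintro ⟨Z, hZ⟩ ⟨Z', hZ'⟩
    exact Submodule.comap_le_comap_iff_of_surjective A.mkQ_surjective

lemma aux_free {R K V : Type*} [CommRing R] [IsDomain R] [IsDiscreteValuationRing R] [Field K]
    [Algebra R K] [IsFractionRing R K] [AddCommGroup V] [Module K V] [Module R V]
    [IsScalarTower R K V] (L : Submodule R V) [Submodule.IsLattice K L]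
    (ϖ : R) (hϖ : Irreducible ϖ) (n : ℕ) :
    aux_ell (ϖ ^ n • L) L = (n * Module.finrank K V : ℕ) := by
  classical
  have : Module.Free R L := Submodule.IsLattice.free K L
  let b := Module.Free.chooseBasis R L
  have hc : ϖ ^ n ≠ 0 := pow_ne_zero _ hϖ.ne_zero
  let f := ((ϖ ^ n • L).mkQ ∘ₗ L.subtype) ∘ₗ b.equivFun.symm.toLinearMap
  have hr : LinearMap.range f = L.map (ϖ ^ n • L).mkQ := by
    simp only [f]
    rw [LinearMap.range_comp_of_range_eq_top _ (LinearEquiv.range _), LinearMap.range_comp,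
      Submodule.range_subtype]
  have := Module.IsTorsionFree.trans_faithfulSMul R K V
  have hk : LinearMap.ker f = Submodule.pi Set.univ (fun _ => Ideal.span {ϖ ^ n}) := by
    ext v
    simp only [LinearMap.mem_ker, Submodule.mem_pi, Set.mem_univ, true_imp_iff,
      Ideal.mem_span_singleton]
    have : f v = 0 ↔ ((b.equivFun.symm v : L) : V) ∈ ϖ ^ n • L := by
      exact Submodule.Quotient.mk_eq_zero _
    rw [this, Submodule.mem_smul_pointwise_iff_exists]
    constructor
    · rintro ⟨y, hy, h⟩ i
      have h2 : ϖ ^ n • (⟨y, hy⟩ : L) = b.equivFun.symm v := Subtype.ext h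
      refine ⟨b.equivFun ⟨y, hy⟩ i, ?_⟩
      have := congrArg b.equivFun h2
      rw [map_smul, LinearEquiv.apply_symm_apply] at this
      rw [← this]; rfl
    · intro h
      choose w hw using h
      refine ⟨b.equivFun.symm w, Subtype.prop _, ?_⟩
      have : v = ϖ ^ n • w := by ext i; simp [hw i]
      rw [this, map_smul]; rfl
  rw [aux_ell, ← hr, ← f.quotKerEquivRange.length_eq,
    (Submodule.quotEquivOfEq _ _ hk).length_eq, (Submodule.quotientPi _).length_eq,
    Module.length_pi_of_fintype]
  have h1 : Module.length R (R ⧸ Ideal.span {ϖ ^ n}) = n := by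
    have := Ring.ord_pow (mem_nonZeroDivisors_of_ne_zero hϖ.ne_zero) n
    rw [Ring.ord_of_irreducible hϖ] at this
    simpa [Ring.ord] using this
  rw [Finset.sum_congr rfl (fun _ _ => h1), Finset.sum_const, Finset.card_univ,
    Module.finrank_eq_card_basis (b.extendOfIsLattice K)]
  simp [mul_comm]

section
variable {R K V : Type*} [CommRing R] [IsDomain R] [IsDiscreteValuationRing R] [Field K]
    [Algebra R K] [IsFractionRing R K] [AddCommGroup V] [Module K V] [Module R V]
    [IsScalarTower R K V]

lemma aux_dd (B : LinearMap.BilinForm K V) (hB : B.Nondegenerate) (hs : B.IsSymm)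
    (L : Submodule R V) (hL : Submodule.IsLattice K L) :
    B.dualSubmodule (B.dualSubmodule L) = L := by
  have : Module.Free R L := Submodule.IsLattice.free K L
  let b := Module.Free.chooseBasis R L
  have h : L = Submodule.span R (Set.range (b.extendOfIsLattice K)) := by
    have h1 : Set.range (b.extendOfIsLattice K) = L.subtype '' Set.range b := by
      rw [← Set.range_comp]
      congr 1
      ext i
      simp
    rw [h1, ← Submodule.map_span, b.span_eq, Submodule.map_top, Submodule.range_subtype]
  rw [h]
  exact B.dualSubmodule_dualSubmodule_of_basis hB hs _

lemma aux_anti (B : LinearMap.BilinForm K V) {L M : Submodule R V} (h : L ≤ M) :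
    B.dualSubmodule M ≤ B.dualSubmodule L := fun _ hx y hy => hx y (h hy)

lemma aux_dual (B : LinearMap.BilinForm K V) (hB : B.Nondegenerate) (hs : B.IsSymm)
    {P Q A C : Submodule R V} (hP : Submodule.IsLattice K P) (hQ : Submodule.IsLattice K Q)
    (hPQ : B.dualSubmodule P = Q) (hPA : P ≤ A) (hAC : A ≤ C) (hCQ : C ≤ Q) :
    aux_ell A C = aux_ell (B.dualSubmodule C) (B.dualSubmodule A) := by
  have hQP : B.dualSubmodule Q = P := by rw [← hPQ, aux_dd B hB hs P hP]
  have lat : ∀ L : Submodule R V, P ≤ L → L ≤ Q → Submodule.IsLattice K L := by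
    intro L h1 h2
    refine Submodule.IsLattice.of_le_of_isLattice_of_fg K h1 ?_
    have : IsNoetherian R L := isNoetherian_of_le h2
    exact Module.Finite.iff_fg.1 inferInstance
  have dd : ∀ L : Submodule R V, P ≤ L → L ≤ Q → B.dualSubmodule (B.dualSubmodule L) = L :=
    fun L h1 h2 => aux_dd B hB hs L (lat L h1 h2)
  have hl : ∀ L : Submodule R V, L ≤ Q → P ≤ B.dualSubmodule L := fun L h => by
    rw [← hQP]; exact aux_anti B h
  have hu : ∀ L : Submodule R V, P ≤ L → B.dualSubmodule L ≤ Q := fun L h => by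
    rw [← hPQ]; exact aux_anti B h
  have h := aux_ell_Icc hAC
  have h' := aux_ell_Icc (aux_anti B hAC)
  suffices (aux_ell A C : WithBot ℕ∞) = aux_ell (B.dualSubmodule C) (B.dualSubmodule A) from
    WithBot.coe_injective this
  rw [h, h', ← Order.krullDim_orderDual (α := Set.Icc (B.dualSubmodule C) (B.dualSubmodule A))]
  have hA := dd A hPA (hAC.trans hCQ)
  have hC := dd C (hPA.trans hAC) hCQ
  refine Order.krullDim_eq_of_orderIso
    { toFun := fun L => OrderDual.toDual
        ⟨B.dualSubmodule L.1, aux_anti B L.2.2, aux_anti B L.2.1⟩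
      invFun := fun L => ⟨B.dualSubmodule (OrderDual.ofDual L).1,
        hA.symm.le.trans (aux_anti B (OrderDual.ofDual L).2.2),
        (aux_anti B (OrderDual.ofDual L).2.1).trans hC.le⟩
      left_inv := ?_
      right_inv := ?_
      map_rel_iff' := ?_ }
  · rintro ⟨L, h1, h2⟩
    ext1
    exact dd L (hPA.trans h1) (h2.trans hCQ)
  · intro L
    refine OrderDual.ofDual.injective (Subtype.ext ?_)
    exact dd _ ((hl _ hCQ).trans (OrderDual.ofDual L).2.1)
      ((OrderDual.ofDual L).2.2.trans (hu _ hPA))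
  · rintro ⟨L, h1, h2⟩ ⟨M, h3, h4⟩
    change B.dualSubmodule M ≤ B.dualSubmodule L ↔ L ≤ M
    refine ⟨fun h => ?_, aux_anti B⟩
    rw [← dd L (hPA.trans h1) (h2.trans hCQ), ← dd M (hPA.trans h3) (h4.trans hCQ)]
    exact aux_anti B h

lemma aux_main (B : LinearMap.BilinForm K V) (hB : B.Nondegenerate) (hs : B.IsSymm)
    (L₀ : Submodule R V) (h₀ : Submodule.IsLattice K L₀) (hd : B.dualSubmodule L₀ = L₀)
    (ϖ : R) (hϖ : Irreducible ϖ) (n : ℕ) :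
    Set.BijOn (fun L : Submodule R V => Submodule.map (ϖ ^ n • L₀).mkQ L)
      {L : Submodule R V | ϖ ^ n • L₀ ≤ L ∧
        L ≤ L₀.comap (LinearMap.lsmul R V (ϖ ^ n)) ∧ B.dualSubmodule L = L}
      {Z : Submodule R (V ⧸ (ϖ ^ n • L₀)) |
        Z ≤ Submodule.map (ϖ ^ n • L₀).mkQ (L₀.comap (LinearMap.lsmul R V (ϖ ^ n))) ∧
        Module.length R ↥Z = (n * Module.finrank K V : ℕ) ∧
        (∀ x ∈ L₀.comap (LinearMap.lsmul R V (ϖ ^ n)),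
         ∀ y ∈ L₀.comap (LinearMap.lsmul R V (ϖ ^ n)),
          (ϖ ^ n • L₀).mkQ x ∈ Z → (ϖ ^ n • L₀).mkQ y ∈ Z →
          B x y ∈ (1 : Submodule R K))} := by
  have hc : ϖ ^ n ≠ 0 := pow_ne_zero _ hϖ.ne_zero
  have hfree := aux_free (K := K) L₀ ϖ hϖ n
  set c := ϖ ^ n with hcdef
  set P := c • L₀ with hPdef
  set Q := L₀.comap (LinearMap.lsmul R V c) with hQdef
  have hc' : algebraMap R K c ≠ 0 := by
    simpa using hc
  have hP0 : P ≤ L₀ := by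
    rintro _ ⟨y, hy, rfl⟩
    exact L₀.smul_mem c hy
  have h0Q : L₀ ≤ Q := fun x hx => L₀.smul_mem c hx
  have hP : Submodule.IsLattice K P :=
    Submodule.IsLattice.smul K L₀ (Units.mk0 _ hc') |> fun h => by
      convert h using 1
      ext x
      simp only [hPdef, Submodule.mem_smul_pointwise_iff_exists, Units.smul_def, Units.val_mk0,
        algebraMap_smul]
  have hPQ : B.dualSubmodule P = Q := by
    have key : ∀ x y : V, B (c • x) y = B x (c • y) := by
      intro x y
      rw [← algebraMap_smul K c x, ← algebraMap_smul K c y]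
      simp
    ext x
    have : x ∈ Q ↔ c • x ∈ B.dualSubmodule L₀ := by rw [hd]; rfl
    rw [this]
    constructor
    · intro h y hy
      rw [key]
      exact h _ (Submodule.smul_mem_pointwise_smul _ _ _ hy)
    · rintro h _ ⟨y, hy, rfl⟩
      have := h y hy
      rw [key] at this
      exact this
  have hQ : Submodule.IsLattice K Q := by
    have : Q = (Units.mk0 _ hc')⁻¹ • L₀ := by
      ext x
      have hx : x ∈ Q ↔ Units.mk0 _ hc' • x ∈ L₀ := by
        rw [Units.smul_def, Units.val_mk0, algebraMap_smul]; rfl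
      rw [hx]
      constructor
      · intro h
        refine ⟨_, h, ?_⟩
        exact inv_smul_smul (Units.mk0 _ hc') x
      · rintro ⟨y, hy, rfl⟩
        have e : Units.mk0 _ hc' • (Units.mk0 _ hc')⁻¹ • y = y := smul_inv_smul _ _
        have hy' : y ∈ L₀ := hy
        rw [← e] at hy'
        exact hy'
    rw [this]
    exact Submodule.IsLattice.smul K L₀ _
  have hPd : B.dualSubmodule Q = P := by rw [← hPQ, aux_dd B hB hs P hP]
  set m := n * Module.finrank K V with hm
  have e1 : aux_ell P Q = m + m := by
    rw [aux_add hP0 h0Q, aux_dual B hB hs hP hQ hPQ hP0 h0Q le_rfl, hPd, hd, hfree]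
  have fin : ∀ a b : ℕ∞, a + b = m + m → ∃ i j : ℕ, a = i ∧ b = j ∧ i + j = m + m := by
    intro a b h
    have ha : a ≠ ⊤ := by rintro rfl; simp at h; exact absurd h.symm (by exact_mod_cast ENat.natCast_ne_top (m+m))
    have hb : b ≠ ⊤ := by rintro rfl; simp at h; exact absurd h.symm (by exact_mod_cast ENat.natCast_ne_top (m+m))
    lift a to ℕ using ha
    lift b to ℕ using hb
    exact ⟨a, b, rfl, rfl, by exact_mod_cast h⟩
  refine ⟨?_, ?_, ?_⟩
  · rintro L ⟨h1, h2, h3⟩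
    refine ⟨Submodule.map_mono h2, ?_, ?_⟩
    · change aux_ell P L = m
      have e2 := aux_dual B hB hs hP hQ hPQ le_rfl h1 h2
      rw [h3, hPQ] at e2
      have e3 := aux_add h1 h2
      rw [e1] at e3
      obtain ⟨i, j, hi, hj, hij⟩ := fin _ _ e3.symm
      rw [hi, hj] at e2
      rw [hi]
      have : i = j := by exact_mod_cast e2
      congr 1; omega
    · intro x _ y _ hx hy
      have hx' := (aux_mem_map h1 x).1 hx
      have hy' := (aux_mem_map h1 y).1 hy
      rw [← h3] at hx'
      exact hx' y hy'
  · rintro L ⟨h1, -, -⟩ L' ⟨h1', -, -⟩ h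
    have := congrArg (Submodule.comap P.mkQ) h
    simpa [Submodule.comap_map_mkQ, sup_eq_right.mpr h1, sup_eq_right.mpr h1'] using this
  · rintro Z ⟨h1, h2, h3⟩
    have hZ : Submodule.map P.mkQ (Submodule.comap P.mkQ Z) = Z :=
      Submodule.map_comap_eq_of_surjective P.mkQ_surjective Z
    set L := Z.comap P.mkQ with hL
    have hPL : P ≤ L := P.le_comap_mkQ Z
    have hLQ : L ≤ Q := fun x hx => (aux_mem_map (hP0.trans h0Q) x).1 (h1 hx)
    refine ⟨L, ⟨hPL, hLQ, ?_⟩, hZ⟩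
    have hiso : L ≤ B.dualSubmodule L := fun x hx y hy => h3 x (hLQ hx) y (hLQ hy) hx hy
    have hdQ : B.dualSubmodule L ≤ Q := by rw [← hPQ]; exact aux_anti B hPL
    have e2 : aux_ell P L = m := by rw [← h2, aux_ell, hZ]
    have e3 := aux_dual B hB hs hP hQ hPQ le_rfl hPL hLQ
    rw [hPQ] at e3
    have e4 := aux_add hPL hLQ
    have e5 := aux_add hiso hdQ
    rw [e1] at e4
    rw [← e3] at e5
    obtain ⟨i, j, hi, hj, hij⟩ := fin _ _ e4.symm
    have him : i = m := by rw [hi] at e2; exact_mod_cast e2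
    have e6 : aux_ell L (B.dualSubmodule L) = 0 := by
      have hjm : j = m := by omega
      rw [hj, e2, hjm] at e5
      have ht : aux_ell L (B.dualSubmodule L) ≠ ⊤ := by
        intro ht; rw [ht] at e5; simp at e5
      lift aux_ell L (B.dualSubmodule L) to ℕ using ht with r
      have : m = r + m := by exact_mod_cast e5
      have : r = 0 := by omega
      simp [this]
    rw [aux_ell, Module.length_eq_zero_iff, Submodule.subsingleton_iff_eq_bot] at e6
    refine le_antisymm (fun x hx => ?_) hiso
    have : L.mkQ x ∈ (B.dualSubmodule L).map L.mkQ := ⟨x, hx, rfl⟩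
    rw [e6, Submodule.mem_bot] at this
    exact (Submodule.Quotient.mk_eq_zero L).1 this
end

theorem statement11
    (p : ℕ) [Fact p.Prime]
    (k : Type*) [Field k] [IsAlgClosed k] [CharP k p]
    (K : Type*) [Field K] [Algebra (WittVector p k) K] [IsFractionRing (WittVector p k) K]
    (𝔤 : Type*) [LieRing 𝔤] [LieAlgebra K 𝔤] [FiniteDimensional K 𝔤]
    [Module (WittVector p k) 𝔤] [IsScalarTower (WittVector p k) K 𝔤]
    (hnd : (killingForm K 𝔤).Nondegenerate)
    (L₀ : Submodule (WittVector p k) 𝔤) (hfg : L₀.FG)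
    (hspan : Submodule.span K (L₀ : Set 𝔤) = ⊤)
    (hbr : ∀ x ∈ L₀, ∀ y ∈ L₀, ⁅x, y⁆ ∈ L₀)
    (hself : {x : 𝔤 | ∀ y ∈ L₀, killingForm K 𝔤 x y ∈ (algebraMap (WittVector p k) K).range}
      = (L₀ : Set 𝔤))
    (n : ℕ) :
    Set.BijOn (fun L : Submodule (WittVector p k) 𝔤 =>
        Submodule.map ((p : WittVector p k) ^ n • L₀).mkQ L)
      {L : Submodule (WittVector p k) 𝔤 |
        (p : WittVector p k) ^ n • L₀ ≤ L ∧
        L ≤ L₀.comap (LinearMap.lsmul (WittVector p k) 𝔤 ((p : WittVector p k) ^ n)) ∧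
        {x : 𝔤 | ∀ y ∈ L, killingForm K 𝔤 x y ∈ (algebraMap (WittVector p k) K).range}
          = (L : Set 𝔤)}
      {Z : Submodule (WittVector p k) (𝔤 ⧸ ((p : WittVector p k) ^ n • L₀)) |
        Z ≤ Submodule.map ((p : WittVector p k) ^ n • L₀).mkQ
            (L₀.comap (LinearMap.lsmul (WittVector p k) 𝔤 ((p : WittVector p k) ^ n))) ∧
        modLength (WittVector p k) ↥Z = (n * Module.finrank K 𝔤 : ℕ) ∧
        (∀ x ∈ L₀.comap (LinearMap.lsmul (WittVector p k) 𝔤 ((p : WittVector p k) ^ n)),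
         ∀ y ∈ L₀.comap (LinearMap.lsmul (WittVector p k) 𝔤 ((p : WittVector p k) ^ n)),
          ((p : WittVector p k) ^ n • L₀).mkQ x ∈ Z →
          ((p : WittVector p k) ^ n • L₀).mkQ y ∈ Z →
          killingForm K 𝔤 x y ∈ (algebraMap (WittVector p k) K).range)} := by
  have hs : (killingForm K 𝔤).IsSymm := ⟨fun x y => by
    simpa using LieModule.traceForm_comm K 𝔤 𝔤 x y⟩
  have hmem : ∀ z : K, z ∈ (1 : Submodule (WittVector p k) K) ↔
      z ∈ (algebraMap (WittVector p k) K).range := fun z => by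
    rw [Submodule.mem_one]; rfl
  have hset : ∀ L : Submodule (WittVector p k) 𝔤,
      {x : 𝔤 | ∀ y ∈ L, killingForm K 𝔤 x y ∈ (algebraMap (WittVector p k) K).range}
        = ((LinearMap.BilinForm.dualSubmodule (killingForm K 𝔤) L :
            Submodule (WittVector p k) 𝔤) : Set 𝔤) := by
    intro L
    ext x
    exact forall₂_congr fun y _ => (hmem _).symm
  have hd : LinearMap.BilinForm.dualSubmodule (killingForm K 𝔤) L₀ = L₀ := by
    apply SetLike.coe_injective
    rw [← hset, hself]
  have main := aux_main (killingForm K 𝔤) hnd hs L₀ ⟨hfg, hspan⟩ hd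
    (p : WittVector p k) (WittVector.irreducible p) n
  have hlen : ∀ Z : Submodule (WittVector p k) (𝔤 ⧸ ((p : WittVector p k) ^ n • L₀)),
      modLength (WittVector p k) ↥Z = (n * Module.finrank K 𝔤 : ℕ) ↔
      Module.length (WittVector p k) ↥Z = (n * Module.finrank K 𝔤 : ℕ) := by
    intro Z
    rw [modLength, ← Module.coe_length]
    exact WithBot.coe_inj
  simp only [hset, SetLike.coe_set_eq, hlen]
  simp only [← hmem]
  exact main
end
end
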